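/- Let q = p^m with p prime and m ≥ 1, and let k be a positive divisor of q−1. Then Spec(Γ(k,q)) ⊆ ℤ (every eigenvalue of the adjacency matrix of Γ(k,q) is the image of an integer) if and only if for every prime ℓ the ℓ-adic valuation of k is at most the ℓ-adic valuation of (q−1)/(p−1), i.e. if and only if k divides (q−1)/(p−1). Moreover, the number of divisors k of q−1 for which Spec(Γ(k,q)) ⊆ ℤ equals the number of divisors of (q−1)/(p−1). -/

import Mathlib

open scoped Classical

/-!
The characters of a finite abelian group `G` are a common eigenbasis of the matrices `f (y - x)`,
so the eigenvalues of an integer-valued connection function `f` are the sums `∑ x, f x * ψ x`. Such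
a sum is an integral polynomial in a primitive `|G|`-th root of unity `ζ`; it is an integer exactly
when it is unchanged by every substitution `ζ ↦ ζ ^ n` with `n` prime to `|G|`, and this
substitution replaces `ψ x` by `ψ (n • x)`. By Fourier inversion the spectrum is therefore integral
iff `f (n • x) = f x` for all `n` prime to `|G|`. For `G = F_q` and `f` the indicator of `R_k`, this
says that `R_k` contains `F_pˣ`; as `R_k` is the group of `(q - 1) / k`-th roots of unity, it means
that `p - 1` divides `(q - 1) / k`.
-/

open Polynomial

section SumsOfRootsOfUnity

variable {K : Type*} [Field K] [CharZero K] {N : ℕ} [NeZero N] {ζ : K}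

lemma aeval_primitiveRoot_pow_eq_intCast (hζ : IsPrimitiveRoot ζ N) {P : ℤ[X]} {z : ℤ}
    (hz : aeval ζ P = z) {n : ℕ} (hn : n.Coprime N) : aeval (ζ ^ n) P = z := by
  have minpoly_dvd : minpoly ℤ (ζ ^ n) ∣ P - C z := by
    rw [← hζ.minpoly_eq_pow_coprime hn]
    exact minpoly.isIntegrallyClosed_dvd (hζ.isIntegral (NeZero.pos N)) (by simp [hz])
  have root : aeval (ζ ^ n) (P - C z) = 0 := aeval_eq_zero_of_dvd_aeval_eq_zero minpoly_dvd
    (minpoly.aeval ℤ (ζ ^ n))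
  simpa [sub_eq_zero] using root

-- The remainder of `P` modulo the cyclotomic polynomial takes the same value at more points than
-- its degree, so it is a constant of `ℤ[X]`.
lemma exists_intCast_eq_aeval_of_forall_coprime (hζ : IsPrimitiveRoot ζ N) {P : ℤ[X]}
    (hP : ∀ n : ℕ, n.Coprime N → aeval (ζ ^ n) P = aeval ζ P) : ∃ z : ℤ, (z : K) = aeval ζ P := by
  set R : ℤ[X] := P %ₘ cyclotomic N ℤ
  have aeval_R : ∀ ξ ∈ primitiveRoots N K, aeval ξ R = aeval ζ P := by
    intro ξ hξ
    have hξ := isPrimitiveRoot_of_mem_primitiveRoots hξ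
    obtain ⟨n, -, hn, rfl⟩ := hζ.isPrimitiveRoot_iff.1 hξ
    rw [← hP n hn]
    refine aeval_modByMonic_eq_self_of_root ?_
    rw [cyclotomic_eq_minpoly hξ (NeZero.pos N), minpoly.aeval]
  have degree_lt : (R.map (algebraMap ℤ K) - C (aeval ζ P)).degree < (primitiveRoots N K).card := by
    rw [hζ.card_primitiveRoots]
    have totient_pos : (0 : WithBot ℕ) < N.totient := by
      exact_mod_cast Nat.totient_pos.2 (NeZero.pos N)
    refine (degree_sub_le _ _).trans_lt (max_lt ?_ (degree_C_le.trans_lt totient_pos))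
    refine degree_map_le.trans_lt ?_
    simpa only [degree_cyclotomic] using degree_modByMonic_lt P (cyclotomic.monic N ℤ)
  have R_eq_C : R.map (algebraMap ℤ K) - C (aeval ζ P) = 0 :=
    eq_zero_of_degree_lt_of_eval_finset_eq_zero _ degree_lt fun ξ hξ => by
      rw [eval_sub, eval_C, eval_map_algebraMap, aeval_R ξ hξ, sub_self]
  refine ⟨R.coeff 0, ?_⟩
  simpa [sub_eq_zero] using congrArg (coeff · 0) R_eq_C

lemma exists_intCast_eq_sum_mul_iff_forall_coprime {ι : Type*} [Fintype ι]
    [HasEnoughRootsOfUnity K N] (c : ι → ℤ) {u : ι → K} (hu : ∀ i, u i ^ N = 1) :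
    (∃ z : ℤ, (z : K) = ∑ i, c i * u i) ↔
      ∀ n : ℕ, n.Coprime N → ∑ i, c i * u i ^ n = ∑ i, c i * u i := by
  obtain ⟨ζ, hζ⟩ := HasEnoughRootsOfUnity.exists_primitiveRoot K N
  choose t _ ht using fun i => hζ.eq_pow_of_pow_eq_one (hu i)
  let P : ℤ[X] := ∑ i, C (c i) * X ^ t i
  have aeval_P (n : ℕ) : aeval (ζ ^ n) P = ∑ i, c i * u i ^ n := by
    simp [P, ← ht, ← pow_mul, mul_comm n]
  have aeval_P_one : aeval ζ P = ∑ i, c i * u i := by simpa using aeval_P 1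
  simp only [← aeval_P, ← aeval_P_one]
  refine ⟨?_, exists_intCast_eq_aeval_of_forall_coprime hζ⟩
  rintro ⟨z, hz⟩ n hn
  rw [← hz, aeval_primitiveRoot_pow_eq_intCast hζ hz.symm hn]

end SumsOfRootsOfUnity

/-- The adjacency matrix of the weighted Cayley digraph of `G` whose arc from `x` to `y` has weight
`f (y - x)`; the Cayley digraph of `S ⊆ G` is the case where `f` is the indicator of `S`. It is the
transpose of `Matrix.circulant f`. -/
def cayleyMatrix {G R : Type*} [Sub G] (f : G → R) : Matrix G G R :=
  Matrix.of fun x y => f (y - x)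

lemma cayleyMatrix_mulVec_addChar {G R : Type*} [AddGroup G] [Fintype G] [CommSemiring R]
    (f : G → R) (ψ : AddChar G R) :
    (cayleyMatrix f).mulVec ψ = (∑ x, f x * ψ x) • ⇑ψ := by
  funext x
  calc ∑ y, f (y - x) * ψ y = ∑ s, f s * ψ (s + x) :=
        Fintype.sum_equiv (Equiv.subRight x) _ _ fun y => by simp
    _ = (∑ s, f s * ψ s) * ψ x := by
        simp only [AddChar.map_add_eq_mul, Finset.sum_mul, mul_assoc]

lemma addChar_pow_natCard_eq_one {G R : Type*} [AddGroup G] [Monoid R] (ψ : AddChar G R)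
    (x : G) : ψ x ^ Nat.card G = 1 := by
  rw [← AddChar.map_nsmul_eq_pow, card_nsmul_eq_zero', AddChar.map_zero_eq_one]

section FiniteAbelianGroup

variable {G : Type*} [AddCommGroup G] [Fintype G]

lemma forall_addChar_sum_mul_eq_iff {f g : G → ℂ} :
    (∀ ψ : AddChar G ℂ, ∑ x, f x * ψ x = ∑ x, g x * ψ x) ↔ f = g := by
  refine ⟨fun h => ?_, fun h ψ => by rw [h]⟩
  have functional_eq : Fintype.linearCombination ℂ f = Fintype.linearCombination ℂ g :=
    (AddChar.complexBasis G).ext fun ψ => by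
      simpa [Fintype.linearCombination_apply, mul_comm] using h ψ
  funext x
  simpa [Fintype.linearCombination_apply_single] using
    LinearMap.congr_fun functional_eq (Pi.single x 1)

theorem spectrum_cayleyMatrix [DecidableEq G] (f : G → ℂ) :
    spectrum ℂ (cayleyMatrix f) = Set.range fun ψ : AddChar G ℂ => ∑ x, f x * ψ x := by
  let b := AddChar.complexBasis G
  have toLin_eq_diagonal : (cayleyMatrix f).toLin' =
      Matrix.toLin b b (Matrix.diagonal fun ψ : AddChar G ℂ => ∑ x, f x * ψ x) :=
    b.ext fun ψ => by
      rw [(hasEigenvector_toLin_diagonal _ ψ b).apply_eq_smul, AddChar.complexBasis_apply,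
        Matrix.toLin'_apply, cayleyMatrix_mulVec_addChar]
  rw [← Matrix.spectrum_toLin', toLin_eq_diagonal, Matrix.spectrum_toLin, spectrum_diagonal]

lemma forall_addChar_sum_mul_nsmul_eq_iff (f : G → ℂ) {n : ℕ} (hn : n.Coprime (Nat.card G)) :
    (∀ ψ : AddChar G ℂ, ∑ x, f x * ψ (n • x) = ∑ x, f x * ψ x) ↔ ∀ x, f (n • x) = f x := by
  let mulN : G ≃ G := nsmulCoprime hn.symm
  have sum_nsmul (ψ : AddChar G ℂ) :
      ∑ x, f x * ψ (n • x) = ∑ x, f (mulN.symm x) * ψ x :=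
    Fintype.sum_equiv mulN _ _ fun x => by rw [mulN.symm_apply_apply]; rfl
  simp only [sum_nsmul, forall_addChar_sum_mul_eq_iff, funext_iff]
  rw [← mulN.forall_congr_right]
  exact forall_congr' fun x => by rw [mulN.symm_apply_apply]; exact eq_comm

theorem spectrum_cayleyMatrix_subset_range_intCast_iff [DecidableEq G] (f : G → ℤ) :
    spectrum ℂ (cayleyMatrix fun x => (f x : ℂ)) ⊆ Set.range ((↑) : ℤ → ℂ) ↔
      ∀ n : ℕ, n.Coprime (Nat.card G) → ∀ x, f (n • x) = f x := by
  have : NeZero (Nat.card G) := ⟨Nat.card_pos.ne'⟩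
  calc
    _ ↔ ∀ ψ : AddChar G ℂ, ∃ z : ℤ, (z : ℂ) = ∑ x, f x * ψ x := by
      rw [spectrum_cayleyMatrix, Set.range_subset_iff]; rfl
    _ ↔ ∀ ψ : AddChar G ℂ, ∀ n : ℕ, n.Coprime (Nat.card G) →
          ∑ x, (f x : ℂ) * ψ (n • x) = ∑ x, f x * ψ x := by
      simp only [AddChar.map_nsmul_eq_pow]
      exact forall_congr' fun ψ =>
        exists_intCast_eq_sum_mul_iff_forall_coprime f (addChar_pow_natCard_eq_one ψ)
    _ ↔ ∀ n : ℕ, n.Coprime (Nat.card G) → ∀ ψ : AddChar G ℂ,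
          ∑ x, (f x : ℂ) * ψ (n • x) = ∑ x, f x * ψ x :=
      ⟨fun h n hn ψ => h ψ n hn, fun h ψ n hn => h n hn ψ⟩
    _ ↔ ∀ n : ℕ, n.Coprime (Nat.card G) → ∀ x, f (n • x) = f x :=
      forall₂_congr fun n hn => by
        simpa only [Int.cast_inj] using
          forall_addChar_sum_mul_nsmul_eq_iff (fun x => (f x : ℂ)) hn

end FiniteAbelianGroup

lemma range_powMonoidHom_eq_ker_of_isCyclic {G : Type*} [CommGroup G] [IsCyclic G] [Finite G]
    {k : ℕ} (hk : k ∣ Nat.card G) :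
    (powMonoidHom k : G →* G).range = (powMonoidHom (Nat.card G / k) : G →* G).ker := by
  refine Subgroup.eq_of_le_of_card_ge ?_ ?_
  · rintro _ ⟨x, rfl⟩
    simp [MonoidHom.mem_ker, ← pow_mul, Nat.mul_div_cancel' hk]
  · rw [IsCyclic.card_powMonoidHom_ker, IsCyclic.card_powMonoidHom_range,
      Nat.gcd_eq_right hk, Nat.gcd_eq_right (Nat.div_dvd_of_dvd hk)]

lemma forall_natCast_pow_eq_one_iff (R : Type*) [Ring R] (p : ℕ) [CharP R p] [Fact p.Prime]
    (d : ℕ) : (∀ n : ℕ, n.Coprime p → (n : R) ^ d = 1) ↔ p - 1 ∣ d := by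
  have natCast_pow_eq_one_iff (n : ℕ) : (n : R) ^ d = 1 ↔ (n : ZMod p) ^ d = 1 := by
    rw [← (ZMod.castHom_injective R).eq_iff, map_pow, map_natCast, map_one]
  simp only [natCast_pow_eq_one_iff]
  calc
    _ ↔ ∀ u : (ZMod p)ˣ, u ^ d = 1 := by
      simp only [Units.ext_iff, Units.val_pow_eq_pow_val, Units.val_one]
      refine ⟨fun h u => ?_, fun h n hn => h (ZMod.unitOfCoprime n hn)⟩
      simpa only [ZMod.natCast_zmod_val] using h _ (ZMod.val_coe_unit_coprime u)
    _ ↔ p - 1 ∣ d := by rw [FiniteField.forall_pow_eq_one_iff, ZMod.card]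

section GeneralizedPaley

variable (F : Type*) [Field F]

/-- The set `R_k` of `k`-th powers of nonzero elements of a field. -/
def nonzeroPowers (k : ℕ) : Set F :=
  {x | ∃ z : F, z ≠ 0 ∧ z ^ k = x}

/-- The adjacency matrix of the generalized Paley graph `Γ(k, q)`, where `F` has `q` elements. -/
noncomputable def generalizedPaleyMatrix (k : ℕ) : Matrix F F ℂ :=
  cayleyMatrix fun x => if x ∈ nonzeroPowers F k then 1 else 0

variable {F} {k : ℕ}

lemma generalizedPaleyMatrix_apply (x y : F) [Decidable (∃ z : F, z ≠ 0 ∧ z ^ k = y - x)] :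
    generalizedPaleyMatrix F k x y = if ∃ z : F, z ≠ 0 ∧ z ^ k = y - x then 1 else 0 :=
  if_congr Iff.rfl rfl rfl

lemma forall_mul_mem_nonzeroPowers_iff {a : F} :
    (∀ x, a * x ∈ nonzeroPowers F k ↔ x ∈ nonzeroPowers F k) ↔ a ∈ nonzeroPowers F k := by
  constructor
  · intro h
    simpa using (h 1).2 ⟨1, one_ne_zero, one_pow k⟩
  · rintro ⟨w, hw, rfl⟩ x
    constructor
    · rintro ⟨z, hz, hzx⟩
      refine ⟨z / w, div_ne_zero hz hw, ?_⟩
      rw [div_pow, hzx, mul_div_cancel_left₀ x (pow_ne_zero k hw)]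
    · rintro ⟨z, hz, rfl⟩
      exact ⟨w * z, mul_ne_zero hw hz, mul_pow w z k⟩

lemma unit_mem_nonzeroPowers_iff_mem_range (u : Fˣ) :
    (u : F) ∈ nonzeroPowers F k ↔ u ∈ (powMonoidHom k : Fˣ →* Fˣ).range := by
  constructor
  · rintro ⟨z, hz, hzu⟩
    exact ⟨Units.mk0 z hz, Units.ext hzu⟩
  · rintro ⟨v, rfl⟩
    exact ⟨v, v.ne_zero, rfl⟩

variable [Fintype F]

lemma unit_mem_nonzeroPowers_iff_pow_eq_one (hk : k ∣ Fintype.card F - 1) (u : Fˣ) :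
    (u : F) ∈ nonzeroPowers F k ↔ (u : F) ^ ((Fintype.card F - 1) / k) = 1 := by
  have card_units : Nat.card Fˣ = Fintype.card F - 1 := by
    rw [Nat.card_eq_fintype_card, Fintype.card_units]
  rw [← card_units] at hk ⊢
  rw [unit_mem_nonzeroPowers_iff_mem_range, range_powMonoidHom_eq_ker_of_isCyclic hk,
    MonoidHom.mem_ker, powMonoidHom_apply, Units.ext_iff, Units.val_pow_eq_pow_val, Units.val_one]

lemma spectrum_generalizedPaleyMatrix_subset_iff_forall_natCast_mem [DecidableEq F] (p : ℕ)
    [CharP F p] [Fact p.Prime] :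
    spectrum ℂ (generalizedPaleyMatrix F k) ⊆ Set.range ((↑) : ℤ → ℂ) ↔
      ∀ n : ℕ, n.Coprime p → (n : F) ∈ nonzeroPowers F k := by
  have matrix_eq : generalizedPaleyMatrix F k =
      cayleyMatrix fun x => ((if x ∈ nonzeroPowers F k then 1 else 0 : ℤ) : ℂ) := by
    simp [generalizedPaleyMatrix]
  have coprime_card_iff (n : ℕ) : n.Coprime (Nat.card F) ↔ n.Coprime p := by
    obtain ⟨m, -, card_eq⟩ := FiniteField.card F p
    rw [Nat.card_eq_fintype_card, card_eq, Nat.coprime_pow_right_iff m.pos]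
  rw [matrix_eq, spectrum_cayleyMatrix_subset_range_intCast_iff]
  refine forall_congr' fun n => imp_congr (coprime_card_iff n) ?_
  rw [← forall_mul_mem_nonzeroPowers_iff]
  refine forall_congr' fun x => ?_
  rw [nsmul_eq_mul]
  split_ifs <;> simp_all

theorem spectrum_generalizedPaleyMatrix_subset_range_intCast_iff [DecidableEq F] (p : ℕ)
    [CharP F p] [hp : Fact p.Prime] (hk : k ∣ Fintype.card F - 1) :
    spectrum ℂ (generalizedPaleyMatrix F k) ⊆ Set.range ((↑) : ℤ → ℂ) ↔
      k ∣ (Fintype.card F - 1) / (p - 1) := by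
  have sub_one_dvd : p - 1 ∣ Fintype.card F - 1 := by
    obtain ⟨m, -, card_eq⟩ := FiniteField.card F p
    simpa [card_eq] using Nat.sub_dvd_pow_sub_pow p 1 m
  calc
    _ ↔ ∀ n : ℕ, n.Coprime p → (n : F) ∈ nonzeroPowers F k :=
      spectrum_generalizedPaleyMatrix_subset_iff_forall_natCast_mem p
    _ ↔ ∀ n : ℕ, n.Coprime p → (n : F) ^ ((Fintype.card F - 1) / k) = 1 := by
      refine forall₂_congr fun n hn => ?_
      obtain ⟨u, hu⟩ := (CharP.isUnit_natCast_iff (R := F) hp.out).2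
        ((hp.out.coprime_iff_not_dvd).1 hn.symm)
      rw [← hu, unit_mem_nonzeroPowers_iff_pow_eq_one hk]
    _ ↔ p - 1 ∣ (Fintype.card F - 1) / k := forall_natCast_pow_eq_one_iff F p _
    _ ↔ k ∣ (Fintype.card F - 1) / (p - 1) := by
      rw [Nat.dvd_div_iff_mul_dvd hk, Nat.dvd_div_iff_mul_dvd sub_one_dvd, mul_comm]

end GeneralizedPaley

theorem gpGraph_integral_spectrum_iff
    (p m k : ℕ) (hp : p.Prime) (hm : 1 ≤ m)
    (F : Type*) [Field F] [Fintype F] [DecidableEq F]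
    (hF : Fintype.card F = p ^ m)
    (hk : 0 < k) (hkdvd : k ∣ p ^ m - 1)
    (A : ℕ → Matrix F F ℂ)
    (hA : ∀ j : ℕ, ∀ x y : F,
      A j x y = if ∃ z : F, z ≠ 0 ∧ z ^ j = y - x then 1 else 0) :
    (spectrum ℂ (A k) ⊆ Set.range ((↑) : ℤ → ℂ) ↔
      ∀ ℓ : ℕ, ℓ.Prime →
        padicValNat ℓ k ≤ padicValNat ℓ ((p ^ m - 1) / (p - 1))) ∧
    (spectrum ℂ (A k) ⊆ Set.range ((↑) : ℤ → ℂ) ↔ k ∣ (p ^ m - 1) / (p - 1)) ∧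
    ((p ^ m - 1).divisors.filter
        (fun j => spectrum ℂ (A j) ⊆ Set.range ((↑) : ℤ → ℂ))).card
      = ((p ^ m - 1) / (p - 1)).divisors.card := by
  have : Fact p.Prime := ⟨hp⟩
  have : CharP F p := charP_of_card_eq_prime_pow hF
  have integral_iff (j : ℕ) (hj : j ∣ p ^ m - 1) :
      spectrum ℂ (A j) ⊆ Set.range ((↑) : ℤ → ℂ) ↔ j ∣ (p ^ m - 1) / (p - 1) := by
    have A_eq : A j = generalizedPaleyMatrix F j := by
      ext x y
      rw [hA, generalizedPaleyMatrix_apply]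
    rw [← hF] at hj ⊢
    rw [A_eq, spectrum_generalizedPaleyMatrix_subset_range_intCast_iff p hj]
  have card_sub_one_ne_zero : p ^ m - 1 ≠ 0 :=
    Nat.sub_ne_zero_of_lt (Nat.one_lt_pow (by omega) hp.one_lt)
  have quotient_dvd : (p ^ m - 1) / (p - 1) ∣ p ^ m - 1 :=
    Nat.div_dvd_of_dvd (by simpa using Nat.sub_dvd_pow_sub_pow p 1 m)
  refine ⟨?_, integral_iff k hkdvd, ?_⟩
  · rw [integral_iff k hkdvd, ← Nat.factorization_prime_le_iff_dvd hk.ne'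
      (ne_zero_of_dvd_ne_zero card_sub_one_ne_zero quotient_dvd)]
    exact forall₂_congr fun ℓ hℓ => by simp only [Nat.factorization_def _ hℓ]
  · rw [← Nat.divisors_filter_dvd_of_dvd card_sub_one_ne_zero quotient_dvd]
    exact congrArg Finset.card
      (Finset.filter_congr fun j hj => integral_iff j (Nat.dvd_of_mem_divisors hj))
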